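/- For all n ≥ 2, opt_weak,<,2(S_n) ≥ p(n), where p(n) = Σ_{m=1}^{n} ⌊log₂ m⌋. -/

import Mathlib

/-- `GuessForce ok V m` means: in the mistake-bound game with weak (yes/no) reinforcement
where queries have type `Q`, guesses have type `A`, and `ok q g f` says that guess `g` is a
correct answer to query `q` when the hidden target is `f`, an (adaptive) adversary whose
answers must stay consistent with some member of the current version space `V` can force
every deterministic learner to be answered "no" at least `m` times.
At each step the adversary chooses a query `q` and, depending on the learner's guess `g`,
either answers "no" (`c g = true`, one more mistake, continuing from the consistent
functions for which the guess is wrong) or answers "yes" (`c g = false`, continuing from the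
consistent functions for which the guess is correct). -/
inductive GuessForce {α Q A : Type*} (ok : Q → A → α → Prop) : Set α → ℕ → Prop where
  | zero (V : Set α) : V.Nonempty → GuessForce ok V 0
  | step (V : Set α) (m : ℕ) (q : Q) (c : A → Bool)
      (hne : ∀ g : A, (if c g then {f ∈ V | ¬ ok q g f} else {f ∈ V | ok q g f}).Nonempty)
      (h : ∀ g : A, GuessForce ok (if c g then {f ∈ V | ¬ ok q g f} else {f ∈ V | ok q g f})
        (if c g then m else m + 1)) :
      GuessForce ok V (m + 1)

/-- `opt_weak,<,r(F)`: the order model. In each round the adversary chooses `r` distinct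
inputs, and the learner guesses the permutation of `{1,…,r}` order-isomorphic to the values
of the target permutation at these inputs; weak reinforcement. -/
noncomputable def optOrder (n r : ℕ) (F : Set (Equiv.Perm (Fin n))) : ℕ :=
  sSup {m | GuessForce
    (fun (x : {x : Fin r → Fin n // Function.Injective x}) (σ : Equiv.Perm (Fin r)) f =>
      ∀ i j, σ i < σ j ↔ f (x.1 i) < f (x.1 j)) F m}

section GuessForce

variable {α Q A : Type*} {ok : Q → A → α → Prop}

theorem GuessForce.nonempty [Nonempty A] {V : Set α} {m : ℕ} (h : GuessForce ok V m) :
    V.Nonempty := by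
  cases h with
  | zero _ hV => exact hV
  | step _ m q c hne _ =>
    obtain ⟨f, hf⟩ := hne (Classical.arbitrary A)
    refine ⟨f, ?_⟩
    split_ifs at hf
    · exact hf.1
    · exact hf.1

theorem GuessForce.mono {V W : Set α} {m : ℕ} (h : GuessForce ok V m) (hVW : V ⊆ W) :
    GuessForce ok W m := by
  induction h generalizing W with
  | zero V hV => exact .zero _ (hV.mono hVW)
  | step V m q c hne h ih =>
    have key : ∀ g, (if c g then {f ∈ V | ¬ ok q g f} else {f ∈ V | ok q g f}) ⊆
        (if c g then {f ∈ W | ¬ ok q g f} else {f ∈ W | ok q g f}) := by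
      intro g
      split_ifs
      · exact fun f hf => ⟨hVW hf.1, hf.2⟩
      · exact fun f hf => ⟨hVW hf.1, hf.2⟩
    exact .step _ m q c (fun g => (hne g).mono (key g)) fun g => ih g (key g)

/-- A learner who always guesses correctly for some remaining candidate loses a candidate with
every mistake. -/
theorem GuessForce.lt_ncard [Finite α] [Nonempty A] (hok : ∀ q f, ∃ g, ok q g f)
    {V : Set α} {m : ℕ} (h : GuessForce ok V m) : m < V.ncard := by
  induction h with
  | zero V hV => exact (Set.ncard_pos).2 hV
  | step V m q c hne h ih =>
    obtain ⟨f, hf⟩ := (GuessForce.step V m q c hne h).nonempty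
    obtain ⟨g, hg⟩ := hok q f
    have hm := ih g
    by_cases hc : c g
    · simp only [hc, if_true] at hm
      have : {f ∈ V | ¬ ok q g f}.ncard < V.ncard :=
        Set.ncard_lt_ncard ⟨Set.sep_subset _ _, fun hV => (hV hf).2 hg⟩
      omega
    · simp only [hc, if_false, Bool.false_eq_true] at hm
      exact hm.trans_le (Set.ncard_le_ncard (Set.sep_subset _ _))

end GuessForce

section Order

variable {n : ℕ}

/-- The correctness relation of the order model. -/
abbrev orderOk (n r : ℕ) (x : {x : Fin r → Fin n // Function.Injective x})
    (σ : Equiv.Perm (Fin r)) (f : Equiv.Perm (Fin n)) : Prop :=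
  ∀ i j, σ i < σ j ↔ f (x.1 i) < f (x.1 j)

theorem exists_orderOk_two (x : {x : Fin 2 → Fin n // Function.Injective x})
    (f : Equiv.Perm (Fin n)) : ∃ σ, orderOk n 2 x σ f := by
  have hne : f (x.1 0) ≠ f (x.1 1) := fun h => by
    simpa using x.2 (f.injective h)
  rcases lt_or_gt_of_ne hne with h | h
  · refine ⟨1, fun i j => ?_⟩
    fin_cases i <;> fin_cases j <;> simp [h, h.le]
  · refine ⟨Equiv.swap 0 1, fun i j => ?_⟩
    fin_cases i <;> fin_cases j <;> simp [h, h.le]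

/-- Answering "no" lets the adversary force a mistake while learning only the outcome of a
comparison. -/
theorem guessForce_succ_of_compare {V : Set (Equiv.Perm (Fin n))} {m : ℕ} {i j : Fin n}
    (hij : i ≠ j) (hlt : GuessForce (orderOk n 2) {f ∈ V | f i < f j} m)
    (hgt : GuessForce (orderOk n 2) {f ∈ V | f j < f i} m) :
    GuessForce (orderOk n 2) V (m + 1) := by
  let q : {x : Fin 2 → Fin n // Function.Injective x} := ⟨![i, j], by
    intro a b hab
    fin_cases a <;> fin_cases b <;> simp_all [eq_comm]⟩
  have key : ∀ g, GuessForce (orderOk n 2) {f ∈ V | ¬ orderOk n 2 q g f} m := by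
    intro g
    by_cases hg : g 0 < g 1
    · exact hgt.mono fun f hf => ⟨hf.1, fun h => lt_asymm hf.2 ((h 0 1).1 hg)⟩
    · exact hlt.mono fun f hf => ⟨hf.1, fun h => hg ((h 0 1).2 hf.2)⟩
  exact .step V m q (fun _ => true) (fun g => (key g).nonempty) fun g => key g

/-- The permutations that are strictly increasing along the list `l`. -/
def increasingAlong (l : List (Fin n)) : Set (Equiv.Perm (Fin n)) :=
  {f | l.Pairwise fun a b => f a < f b}

theorem increasingAlong_nonempty {l : List (Fin n)} (hl : l.Nodup) (hn : l.length = n) :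
    (increasingAlong l).Nonempty := by
  have hinj : Function.Injective fun i : Fin n => l.get (i.cast hn.symm) :=
    (List.nodup_iff_injective_get.1 hl).comp (Fin.cast_injective _)
  let e := Equiv.ofBijective _ (Finite.injective_iff_bijective.1 hinj)
  have he : ∀ i (hi : i < l.length), e.symm l[i] = ⟨i, hn ▸ hi⟩ := fun i hi =>
    (Equiv.symm_apply_eq e).2 rfl
  refine ⟨e.symm, List.pairwise_iff_getElem.2 fun i j hi hj hij => ?_⟩
  rw [he, he]
  exact hij

/-- Binary insertion of `x` into the sorted list `L ++ M ++ R`, once `x` is known to lie above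
`L` and below `R`. -/
theorem guessForce_insert {x : Fin n} {m : ℕ} (v : ℕ) (L M R : List (Fin n))
    (hx : x ∉ M) (hv : 2 ^ v ≤ M.length + 1)
    (h : ∀ L' R', L' ++ R' = L ++ M ++ R →
      GuessForce (orderOk n 2) (increasingAlong (L' ++ x :: R')) m) :
    GuessForce (orderOk n 2)
      {f ∈ increasingAlong (L ++ M ++ R) | (∀ a ∈ L, f a < f x) ∧ ∀ b ∈ R, f x < f b}
      (m + v) := by
  induction v generalizing L M R with
  | zero =>
    refine (h (L ++ M) R rfl).mono fun f hf => ?_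
    simp only [increasingAlong, List.pairwise_append, List.pairwise_cons, List.mem_append,
      List.mem_cons, Set.mem_ofPred_eq] at hf ⊢
    grind
  | succ v ih =>
    obtain ⟨M₁, y, M₂, rfl, h₁, h₂⟩ : ∃ M₁ y M₂, M = M₁ ++ y :: M₂ ∧
        2 ^ v ≤ M₁.length + 1 ∧ 2 ^ v ≤ M₂.length + 1 := by
      have hpos := Nat.two_pow_pos v
      rw [pow_succ] at hv
      have hlt : 2 ^ v - 1 < M.length := by omega
      refine ⟨M.take (2 ^ v - 1), M[2 ^ v - 1], M.drop (2 ^ v - 1 + 1), ?_, ?_, ?_⟩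
      · rw [← List.drop_eq_getElem_cons hlt, List.take_append_drop]
      · rw [List.length_take]; omega
      · rw [List.length_drop]; omega
    simp only [List.mem_append, List.mem_cons, not_or] at hx
    refine guessForce_succ_of_compare hx.2.1 ?_ ?_
    · refine (ih L M₁ (y :: M₂ ++ R) hx.1 h₁ fun L' R' e => h L' R' (by simp [e])).mono
        fun f hf => ?_
      simp only [increasingAlong, List.pairwise_append, List.pairwise_cons, List.mem_append,
        List.mem_cons, Set.mem_ofPred_eq] at hf ⊢
      grind
    · refine (ih (L ++ M₁ ++ [y]) M₂ R hx.2.2 h₂ fun L' R' e => h L' R' (by simp [e])).mono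
        fun f hf => ?_
      simp only [increasingAlong, List.pairwise_append, List.pairwise_cons, List.mem_append,
        List.mem_cons, Set.mem_ofPred_eq] at hf ⊢
      grind

/-- Sorting by binary insertion, starting from the sorted list `l`. -/
theorem guessForce_increasingAlong (d : ℕ) (l : List (Fin n)) (hl : l.Nodup)
    (hd : l.length + d = n) :
    GuessForce (orderOk n 2) (increasingAlong l)
      (∑ i ∈ Finset.range d, Nat.log 2 (l.length + 1 + i)) := by
  induction d generalizing l with
  | zero => exact .zero _ (increasingAlong_nonempty hl hd)
  | succ d ih =>
    obtain ⟨x, hx⟩ : ∃ x, x ∉ l := by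
      by_contra! hall
      have := Finset.card_le_card (fun x _ => List.mem_toFinset.2 (hall x) :
        (Finset.univ : Finset (Fin n)) ⊆ l.toFinset)
      rw [Finset.card_univ, Fintype.card_fin] at this
      have := l.toFinset_card_le
      omega
    rw [Finset.sum_range_succ']
    refine (guessForce_insert _ [] l [] hx (Nat.pow_log_le_self 2 (Nat.succ_ne_zero _))
      fun L R e => ?_).mono fun f hf => by simpa using hf.1
    have e' : L ++ R = l := by simpa using e
    subst e'
    have hperm : (L ++ x :: R).Perm (x :: (L ++ R)) := List.perm_middle
    have hlen : (L ++ x :: R).length = (L ++ R).length + 1 := by simpa using hperm.length_eq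
    have := ih (L ++ x :: R) (hperm.nodup_iff.2 (List.nodup_cons.2 ⟨hx, hl⟩)) (by omega)
    rw [hlen] at this
    simpa only [add_assoc, add_comm, add_left_comm] using this

end Order

/-- For all `n ≥ 2`, `opt_weak,<,2(S_n) ≥ p(n)`, where
`p(n) = Σ_{m=1}^{n} ⌊log₂ m⌋`. -/
theorem stmt13 (n : ℕ) (hn : 2 ≤ n) :
    ∑ m ∈ Finset.Icc 1 n, Nat.log 2 m
      ≤ optOrder n 2 (Set.univ : Set (Equiv.Perm (Fin n))) := by
  refine le_csSup ⟨_, fun m hm => (GuessForce.lt_ncard exists_orderOk_two hm).le⟩ ?_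
  have h := (guessForce_increasingAlong (n := n) n [] List.nodup_nil (by simp)).mono (Set.subset_univ _)
  have hsum : ∑ m ∈ Finset.Icc 1 n, Nat.log 2 m =
      ∑ i ∈ Finset.range n, Nat.log 2 (([] : List (Fin n)).length + 1 + i) := by
    rw [← Finset.Ico_add_one_right_eq_Icc, Finset.sum_Ico_eq_sum_range]
    simp
  rw [hsum]
  exact h
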